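/- Let T be a decision tree for a training set (E, λ) and suppose some decision tree with zero errors on (E, λ) is obtainable from T by a sequence of subtree raising operations. If v is a leaf of T containing an example misclassified by T, then T is not a single leaf, v has a parent w, and some decision tree with zero errors on (E, λ) is obtainable by subtree raising operations from the tree T₁ that results from T by the raising operation at w keeping the child of w other than v. -/

import Mathlib

/-- The two class labels. -/
inductive Label where
  | blue
  | red
deriving DecidableEq

/-- A decision tree over examples `ι → ℝ` with classes `{blue, red}`:
every inner node carries a feature and a threshold, every leaf a class label.
An example goes to the left child if its value in the node's feature is at most
the threshold, and to the right child otherwise. -/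
inductive DTree (ι : Type) where
  | leaf (c : Label)
  | node (feat : ι) (thr : ℝ) (left right : DTree ι)

namespace DTree

variable {ι : Type}

/-- The class that a decision tree assigns to an example. -/
noncomputable def classify : DTree ι → (ι → ℝ) → Label
  | .leaf c, _ => c
  | .node f t l r, e => if e f ≤ t then l.classify e else r.classify e

/-- The routing path of an example (`false` = left child, `true` = right child);
it is the position of the leaf of the example. -/
noncomputable def route : DTree ι → (ι → ℝ) → List Bool
  | .leaf _, _ => []
  | .node f t l r, e => if e f ≤ t then false :: l.route e else true :: r.route e

/-- The subtree rooted at a position (`none` if the position is not a node). -/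
def subtreeAt : DTree ι → List Bool → Option (DTree ι)
  | T, [] => some T
  | .leaf _, _ :: _ => none
  | .node _ _ l r, b :: p => (if b then r else l).subtreeAt p

/-- Replace the subtree at a given position by another tree. -/
def replaceAt : DTree ι → List Bool → DTree ι → DTree ι
  | _, [], T' => T'
  | .leaf c, _ :: _, _ => .leaf c
  | .node f t l r, b :: p, T' =>
      if b then .node f t l (r.replaceAt p T') else .node f t (l.replaceAt p T') r

/-- The number of inner nodes of a decision tree. -/
def innerCount : DTree ι → ℕ
  | .leaf _ => 0
  | .node _ _ l r => 1 + l.innerCount + r.innerCount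

/-- The position `p` is an inner node of `T`. -/
def IsInnerPos (T : DTree ι) (p : List Bool) : Prop :=
  ∃ f t l r, T.subtreeAt p = some (.node f t l r)

/-- The position `p` is a node of `T`. -/
def IsNodePos (T : DTree ι) (p : List Bool) : Prop :=
  (T.subtreeAt p).isSome

/-- The feature and threshold of the inner node at position `p`. -/
def cutAt (T : DTree ι) (p : List Bool) : Option (ι × ℝ) :=
  match T.subtreeAt p with
  | some (.node f t _ _) => some (f, t)
  | _ => none

/-- The subtree raising operation at position `q` keeping the child in direction `b`:
the subtree rooted at `q` is replaced by the subtree rooted at its `b`-child; it prunes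
the node at `q` together with all inner nodes of the subtree rooted at the other child. -/
def raiseAt (T : DTree ι) (q : List Bool) (b : Bool) : DTree ι :=
  match T.subtreeAt q with
  | some (.node _ _ l r) => T.replaceAt q (if b then r else l)
  | _ => T

end DTree

/-- `E[T,p]`: the examples of `E` whose routing through `T` passes the position `p`. -/
noncomputable def reach {ι : Type} (E : Finset (ι → ℝ)) (T : DTree ι) (p : List Bool) :
    Finset (ι → ℝ) :=
  E.filter fun e => p <+: T.route e

/-- The number of errors of `T` on the training set `(E, lab)`. -/
noncomputable def errCount {ι : Type} (T : DTree ι) (E : Finset (ι → ℝ))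
    (lab : (ι → ℝ) → Label) : ℕ :=
  (E.filter fun e => T.classify e ≠ lab e).card

/-- A most frequent label of the labeled set `(E, lab)` (blue in case of a tie). -/
def majorityLabel {ι : Type} (E : Finset (ι → ℝ)) (lab : (ι → ℝ) → Label) : Label :=
  if (E.filter fun e => lab e = Label.red).card ≤ (E.filter fun e => lab e = Label.blue).card
  then Label.blue else Label.red

/-- One subtree replacement operation: some inner node of `T` is replaced by a leaf
labeled with a most frequent label of the examples reaching it. -/
def ReplStep {ι : Type} (E : Finset (ι → ℝ)) (lab : (ι → ℝ) → Label)
    (T T' : DTree ι) : Prop :=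
  ∃ p, T.IsInnerPos p ∧
    T' = T.replaceAt p (.leaf (majorityLabel (reach E T p) lab))

/-- `T` is a reasonable decision tree for `(E, lab)`: every node is reached by some
example and every leaf carries a most frequent label of the examples reaching it. -/
def Reasonable {ι : Type} (E : Finset (ι → ℝ)) (lab : (ι → ℝ) → Label)
    (T : DTree ι) : Prop :=
  (∀ p, T.IsNodePos p → (reach E T p).Nonempty) ∧
  (∀ p c, T.subtreeAt p = some (.leaf c) → ∀ c' : Label,
    ((reach E T p).filter fun e => lab e = c').card ≤
      ((reach E T p).filter fun e => lab e = c).card)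

/-- Apply a sequence of raising operations (given by positions and kept directions). -/
def applySeq {ι : Type} : DTree ι → List (List Bool × Bool) → DTree ι
  | T, [] => T
  | T, (q, b) :: rest => applySeq (T.raiseAt q b) rest

/-- Each raising operation of the sequence is applied at an inner node. -/
def ValidSeq {ι : Type} : DTree ι → List (List Bool × Bool) → Prop
  | _, [] => True
  | T, (q, b) :: rest => T.IsInnerPos q ∧ ValidSeq (T.raiseAt q b) rest

/-- The total number of inner nodes pruned by a sequence of raising operations. -/
def seqPruned {ι : Type} : DTree ι → List (List Bool × Bool) → ℕ
  | _, [] => 0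
  | T, (q, b) :: rest =>
      (match T.subtreeAt q with
        | some (.node _ _ l r) => 1 + DTree.innerCount (if b then l else r)
        | _ => 0) + seqPruned (T.raiseAt q b) rest

/-- `T'` is obtained from `T` by a (possibly empty) sequence of subtree raising
operations. -/
def RaisedFrom {ι : Type} (T T' : DTree ι) : Prop :=
  ∃ steps, ValidSeq T steps ∧ applySeq T steps = T'

/-- `T'` is obtained from `T` by a sequence of subtree raising operations pruning
exactly `m` inner nodes in total. -/
def RaisedFromPruning {ι : Type} (T : DTree ι) (m : ℕ) (T' : DTree ι) : Prop :=
  ∃ steps, ValidSeq T steps ∧ seqPruned T steps = m ∧ applySeq T steps = T'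

/-- Tracking the position of a node through one raising operation: nodes strictly
below the raised node on the discarded side, and the raised node itself, are pruned
(`none`); all other nodes survive at a possibly shifted position. -/
def stepMap (q : List Bool) (b : Bool) (p : List Bool) : Option (List Bool) :=
  if q <+: p then
    if q ++ [b] <+: p then some (q ++ p.drop (q.length + 1)) else none
  else some p

/-- Tracking the position of a node through a sequence of raising operations. -/
def seqMap : List (List Bool × Bool) → List Bool → Option (List Bool)
  | [], p => some p
  | (q, b) :: rest, p => (stepMap q b p).bind (seqMap rest)

/-- The number of errors of `T` on a multiset of labeled examples. -/
noncomputable def errCountM {ι : Type} (T : DTree ι) (E : Multiset ((ι → ℝ) × Label)) : ℕ :=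
  (E.filter fun q => T.classify q.1 ≠ q.2).card

/-- Structural description of subtree raising: every inner node is either kept, with both
subtrees raised, or dropped in favour of a raised version of one of its children. -/
inductive DTree.Raises {ι : Type} : DTree ι → DTree ι → Prop
  | leaf (c : Label) : Raises (.leaf c) (.leaf c)
  | node {f : ι} {t : ℝ} {l l' r r' : DTree ι} (hl : Raises l l') (hr : Raises r r') :
      Raises (.node f t l r) (.node f t l' r')
  | left {f : ι} {t : ℝ} {l r T' : DTree ι} (hl : Raises l T') : Raises (.node f t l r) T'
  | right {f : ι} {t : ℝ} {l r T' : DTree ι} (hr : Raises r T') : Raises (.node f t l r) T'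

namespace DTree

variable {ι : Type}

theorem Raises.refl (T : DTree ι) : T.Raises T := by
  induction T with
  | leaf c => exact .leaf c
  | node f t l r hl hr => exact .node hl hr

@[simp]
theorem isInnerPos_cons {f : ι} {t : ℝ} {l r : DTree ι} {a : Bool} {q : List Bool} :
    (node f t l r).IsInnerPos (a :: q) ↔ (if a then r else l).IsInnerPos q := by
  simp [IsInnerPos, subtreeAt]

theorem isInnerPos_nil (f : ι) (t : ℝ) (l r : DTree ι) : (node f t l r).IsInnerPos [] :=
  ⟨f, t, l, r, rfl⟩

@[simp]
theorem raiseAt_node_nil (f : ι) (t : ℝ) (l r : DTree ι) (b : Bool) :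
    (node f t l r).raiseAt [] b = if b then r else l := by
  simp [raiseAt, subtreeAt, replaceAt]

@[simp]
theorem raiseAt_node_false (f : ι) (t : ℝ) (l r : DTree ι) (q : List Bool) (b : Bool) :
    (node f t l r).raiseAt (false :: q) b = node f t (l.raiseAt q b) r := by
  simp only [raiseAt, subtreeAt, replaceAt, Bool.false_eq_true, if_false]
  split <;> simp_all

@[simp]
theorem raiseAt_node_true (f : ι) (t : ℝ) (l r : DTree ι) (q : List Bool) (b : Bool) :
    (node f t l r).raiseAt (true :: q) b = node f t l (r.raiseAt q b) := by
  simp only [raiseAt, subtreeAt, replaceAt, if_true]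
  split <;> simp_all

theorem Raises.of_raiseAt {T T' : DTree ι} {q : List Bool} {b : Bool} (hq : T.IsInnerPos q)
    (h : (T.raiseAt q b).Raises T') : T.Raises T' := by
  induction T generalizing q T' with
  | leaf c => cases q <;> simp [IsInnerPos, subtreeAt] at hq
  | node f t l r ihl ihr =>
    rcases q with _ | ⟨_ | _, q⟩
    · cases b
      · exact .left (by simpa using h)
      · exact .right (by simpa using h)
    · rw [isInnerPos_cons] at hq
      rw [raiseAt_node_false] at h
      cases h with
      | node hl hr => exact .node (ihl hq hl) hr
      | left hl => exact .left (ihl hq hl)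
      | right hr => exact .right hr
    · rw [isInnerPos_cons] at hq
      rw [raiseAt_node_true] at h
      cases h with
      | node hl hr => exact .node hl (ihr hq hr)
      | left hl => exact .left hl
      | right hr => exact .right (ihr hq hr)

theorem Raises.of_raisedFrom {T T' : DTree ι} (h : RaisedFrom T T') : T.Raises T' := by
  obtain ⟨steps, hv, rfl⟩ := h
  induction steps generalizing T with
  | nil => exact .refl T
  | cons s steps ih => exact .of_raiseAt hv.1 (ih hv.2)

end DTree

namespace RaisedFrom

variable {ι : Type}

theorem refl (T : DTree ι) : RaisedFrom T T := ⟨[], trivial, rfl⟩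

theorem head {T T' : DTree ι} {q : List Bool} {b : Bool} (hq : T.IsInnerPos q)
    (h : RaisedFrom (T.raiseAt q b) T') : RaisedFrom T T' := by
  obtain ⟨steps, hv, ha⟩ := h
  exact ⟨(q, b) :: steps, ⟨hq, hv⟩, ha⟩

theorem trans {T₁ T₂ T₃ : DTree ι} (h : RaisedFrom T₁ T₂) (h' : RaisedFrom T₂ T₃) :
    RaisedFrom T₁ T₃ := by
  obtain ⟨steps, hv, rfl⟩ := h
  induction steps generalizing T₁ with
  | nil => exact h'
  | cons s steps ih => exact head hv.1 (ih hv.2 h')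

theorem node_left (f : ι) (t : ℝ) {l l' : DTree ι} (r : DTree ι) (h : RaisedFrom l l') :
    RaisedFrom (.node f t l r) (.node f t l' r) := by
  obtain ⟨steps, hv, rfl⟩ := h
  induction steps generalizing l with
  | nil => exact refl _
  | cons s steps ih =>
    refine head (q := false :: s.1) (b := s.2) (by simpa using hv.1) ?_
    rw [DTree.raiseAt_node_false]
    exact ih hv.2

theorem node_right (f : ι) (t : ℝ) (l : DTree ι) {r r' : DTree ι} (h : RaisedFrom r r') :
    RaisedFrom (.node f t l r) (.node f t l r') := by
  obtain ⟨steps, hv, rfl⟩ := h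
  induction steps generalizing r with
  | nil => exact refl _
  | cons s steps ih =>
    refine head (q := true :: s.1) (b := s.2) (by simpa using hv.1) ?_
    rw [DTree.raiseAt_node_true]
    exact ih hv.2

theorem of_raises {T T' : DTree ι} (h : T.Raises T') : RaisedFrom T T' := by
  induction h with
  | leaf c => exact refl _
  | node _ _ hl hr => exact (node_left _ _ _ hl).trans (node_right _ _ _ hr)
  | left _ hl => exact head (b := false) (DTree.isInnerPos_nil _ _ _ _) (by simpa using hl)
  | right _ hr => exact head (b := true) (DTree.isInnerPos_nil _ _ _ _) (by simpa using hr)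

end RaisedFrom

/-- The leaf of an example is the root or the child of an inner node. -/
theorem DTree.leaf_or_exists_parent {ι : Type} (T : DTree ι) (e : ι → ℝ) :
    (∃ c, T = .leaf c) ∨
      ∃ (w : List Bool) (b : Bool), T.route e = w ++ [b] ∧ T.IsInnerPos w := by
  induction T with
  | leaf c => exact .inl ⟨c, rfl⟩
  | node f t l r ihl ihr =>
    right
    by_cases hle : e f ≤ t
    · simp only [route, hle, if_true]
      rcases ihl with ⟨c, rfl⟩ | ⟨w, b, hw, hi⟩
      · exact ⟨[], false, rfl, isInnerPos_nil _ _ _ _⟩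
      · exact ⟨false :: w, b, by simp [hw], by simpa using hi⟩
    · simp only [route, hle, if_false]
      rcases ihr with ⟨c, rfl⟩ | ⟨w, b, hw, hi⟩
      · exact ⟨[], true, rfl, isInnerPos_nil _ _ _ _⟩
      · exact ⟨true :: w, b, by simp [hw], by simpa using hi⟩

/-- If raising changes the class of an example `e`, then the leaf of `e` may be pruned first,
by raising its sibling. -/
theorem DTree.Raises.exists_raiseAt_of_classify_ne {ι : Type} {T T' : DTree ι} {e : ι → ℝ}
    (h : T.Raises T') (hne : T.classify e ≠ T'.classify e) :
    ∃ (w : List Bool) (b : Bool), T.route e = w ++ [b] ∧ T.IsInnerPos w ∧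
      (T.raiseAt w (!b)).Raises T' := by
  induction T generalizing T' with
  | leaf c => cases h; exact absurd rfl hne
  | node f t l r ihl ihr =>
    by_cases hle : e f ≤ t
    · simp only [classify, route, hle, if_true] at hne ⊢
      cases h with
      | node hl hr =>
        simp only [classify, hle, if_true] at hne
        obtain ⟨w, b, hw, hi, hR⟩ := ihl hl hne
        exact ⟨false :: w, b, by simp [hw], by simpa using hi, by simpa using .node hR hr⟩
      | left hl =>
        obtain ⟨w, b, hw, hi, hR⟩ := ihl hl hne
        exact ⟨false :: w, b, by simp [hw], by simpa using hi, by simpa using .left hR⟩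
      | right hr =>
        rcases l.leaf_or_exists_parent e with ⟨c, rfl⟩ | ⟨w, b, hw, hi⟩
        · exact ⟨[], false, rfl, isInnerPos_nil _ _ _ _, by simpa using hr⟩
        · exact ⟨false :: w, b, by simp [hw], by simpa using hi, by simpa using .right hr⟩
    · simp only [classify, route, hle, if_false] at hne ⊢
      cases h with
      | node hl hr =>
        simp only [classify, hle, if_false] at hne
        obtain ⟨w, b, hw, hi, hR⟩ := ihr hr hne
        exact ⟨true :: w, b, by simp [hw], by simpa using hi, by simpa using .node hl hR⟩
      | left hl =>
        rcases r.leaf_or_exists_parent e with ⟨c, rfl⟩ | ⟨w, b, hw, hi⟩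
        · exact ⟨[], true, rfl, isInnerPos_nil _ _ _ _, by simpa using hl⟩
        · exact ⟨true :: w, b, by simp [hw], by simpa using hi, by simpa using .left hl⟩
      | right hr =>
        obtain ⟨w, b, hw, hi, hR⟩ := ihr hr hne
        exact ⟨true :: w, b, by simp [hw], by simpa using hi, by simpa using .right hR⟩

/-- Suppose some decision tree with zero errors on `(E, lab)` is
obtainable from `T` by subtree raising operations. If `v` is a leaf of `T`
containing an example misclassified by `T`, then `T` is not a single leaf, `v` has
a parent `w` (so `v = w ++ [b]`), and some decision tree with zero errors on
`(E, lab)` is obtainable by subtree raising operations from the tree resulting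
from `T` by the raising operation at `w` keeping the child of `w` other than `v`. -/
theorem stmt5 {d : ℕ} (E : Finset (Fin d → ℝ)) (lab : (Fin d → ℝ) → Label)
    (T : DTree (Fin d))
    (hzero : ∃ T', RaisedFrom T T' ∧ errCount T' E lab = 0)
    (v : List Bool) (c : Label) (hleaf : T.subtreeAt v = some (.leaf c))
    (e : Fin d → ℝ) (he : e ∈ E) (hroute : T.route e = v)
    (hmis : T.classify e ≠ lab e) :
    (∀ c' : Label, T ≠ .leaf c')
    ∧ ∃ (w : List Bool) (b : Bool), v = w ++ [b] ∧ T.IsInnerPos w ∧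
        ∃ T', RaisedFrom (T.raiseAt w (!b)) T' ∧ errCount T' E lab = 0 := by
  obtain ⟨T', hT', hzero'⟩ := hzero
  have hcorrect : T'.classify e = lab e := by
    by_contra hne
    rw [errCount, Finset.card_eq_zero] at hzero'
    exact Finset.notMem_empty e (hzero' ▸ Finset.mem_filter.mpr ⟨he, hne⟩)
  obtain ⟨w, b, hw, hi, hR⟩ :=
    (DTree.Raises.of_raisedFrom hT').exists_raiseAt_of_classify_ne (hcorrect.symm ▸ hmis)
  refine ⟨?_, w, b, hroute ▸ hw, hi, T', .of_raises hR, hzero'⟩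
  rintro c' rfl
  simp [DTree.route] at hw
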